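/- Let α ∈ (1,∞) and let ρ_AB be a density matrix on a bipartite space with marginal ρ_B = tr_A ρ_AB. Then the supremum over all density matrices σ_B on the B-system whose kernel is contained in the kernel of ρ_B of (1/(1−α)) · log tr(ρ_AB^α · (1_A ⊗ σ_B^{1−α})) equals (α/(1−α)) · log tr( (tr_A(ρ_AB^α))^{1/α} ), where σ_B^{1−α} is evaluated on the support of σ_B; the supremum is attained at σ_B* = (tr_A ρ_AB^α)^{1/α} / tr((tr_A ρ_AB^α)^{1/α}). -/

import Mathlib

open scoped Kronecker ComplexOrder
open Matrix

/-- Real power of a matrix via the functional calculus on the eigenvalues,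
with the convention `0 ^ t = 0` (powers taken on the support). -/
noncomputable def matRpow {n : Type*} [Fintype n] [DecidableEq n]
    (A : Matrix n n ℂ) (t : ℝ) : Matrix n n ℂ :=
  if hA : A.IsHermitian then
    (hA.eigenvectorUnitary : Matrix n n ℂ) *
      Matrix.diagonal (fun i =>
        ((if hA.eigenvalues i = 0 then (0 : ℝ) else (hA.eigenvalues i) ^ t : ℝ) : ℂ)) *
      star (hA.eigenvectorUnitary : Matrix n n ℂ)
  else 0

/-- Matrix logarithm on the support. -/
noncomputable def matLog {n : Type*} [Fintype n] [DecidableEq n]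
    (A : Matrix n n ℂ) : Matrix n n ℂ :=
  if hA : A.IsHermitian then
    (hA.eigenvectorUnitary : Matrix n n ℂ) *
      Matrix.diagonal (fun i => ((Real.log (hA.eigenvalues i) : ℝ) : ℂ)) *
      star (hA.eigenvectorUnitary : Matrix n n ℂ)
  else 0

/-- Partial trace over the first tensor factor. -/
noncomputable def trFst {a b : Type*} [Fintype a] (M : Matrix (a × b) (a × b) ℂ) :
    Matrix b b ℂ :=
  Matrix.of fun j j' => ∑ i, M (i, j) (i, j')

/-- Partial trace over the second tensor factor. -/
noncomputable def trSnd {a b : Type*} [Fintype b] (M : Matrix (a × b) (a × b) ℂ) :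
    Matrix a a ℂ :=
  Matrix.of fun i i' => ∑ j, M (i, j) (i', j)

/-- Partial trace over the third factor of a tripartite system. -/
noncomputable def trThird {a b c : Type*} [Fintype c]
    (M : Matrix (a × b × c) (a × b × c) ℂ) : Matrix (a × b) (a × b) ℂ :=
  Matrix.of fun p p' => ∑ k, M (p.1, p.2, k) (p'.1, p'.2, k)

/-- Partial trace over the second factor of a tripartite system. -/
noncomputable def trSecond {a b c : Type*} [Fintype b]
    (M : Matrix (a × b × c) (a × b × c) ℂ) : Matrix (a × c) (a × c) ℂ :=
  Matrix.of fun p p' => ∑ j, M (p.1, j, p.2) (p'.1, j, p'.2)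

/-- Partial trace over the first two factors of a tripartite system. -/
noncomputable def trFstSnd {a b c : Type*} [Fintype a] [Fintype b]
    (M : Matrix (a × b × c) (a × b × c) ℂ) : Matrix c c ℂ :=
  Matrix.of fun k k' => ∑ i, ∑ j, M (i, j, k) (i, j, k')

/-- Partial trace over the first and third factors of a tripartite system. -/
noncomputable def trFstThird {a b c : Type*} [Fintype a] [Fintype c]
    (M : Matrix (a × b × c) (a × b × c) ℂ) : Matrix b b ℂ :=
  Matrix.of fun j j' => ∑ i, ∑ k, M (i, j, k) (i, j', k)

/-- Quantum Rényi relative entropy `D_α(ρ‖σ)`. -/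
noncomputable def renyiDiv {n : Type*} [Fintype n] [DecidableEq n]
    (α : ℝ) (ρ σ : Matrix n n ℂ) : ℝ :=
  (α - 1)⁻¹ * Real.log ((matRpow ρ α * matRpow σ (1 - α)).trace.re)

/-- Sandwiched quantum Rényi divergence `D̃_α(ρ‖σ)`. -/
noncomputable def sandwichedRenyiDiv {n : Type*} [Fintype n] [DecidableEq n]
    (α : ℝ) (ρ σ : Matrix n n ℂ) : ℝ :=
  (α - 1)⁻¹ * Real.log
    ((matRpow (matRpow σ ((1 - α) / (2 * α)) * ρ * matRpow σ ((1 - α) / (2 * α))) α).trace.re)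

/-- Quantum relative entropy `D(ρ‖σ)`. -/
noncomputable def relEntropy {n : Type*} [Fintype n] [DecidableEq n]
    (ρ σ : Matrix n n ℂ) : ℝ :=
  (ρ * (matLog ρ - matLog σ)).trace.re

/-!
Diagonalising two positive semidefinite matrices `A` and `B` turns `tr (f(A) g(B))` into a
nonnegative combination of the numbers `f(a) g(b)`, with `a` and `b` eigenvalues, so scalar
inequalities lift to traces. Weighted AM-GM lifts to
`α tr A^{1/α} ≤ tr (A B^{1-α}) + (α - 1) tr B`, where the condition `ker B ⊆ ker A` makes the
eigenvalue `0` of `B` harmless. Optimising over rescalings of `B` gives the reverse Hölder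
inequality `(tr A^{1/α})^α ≤ tr (A B^{1-α}) (tr B)^{α-1}`, with equality at `B ∝ A^{1/α}`. For
`A = tr_A ρ^α` and a state `B = σ`, the first factor on the right is `tr (ρ^α (1 ⊗ σ^{1-α}))`, and
the supremum is read off because `log / (1 - α)` is decreasing. Finally
`ker tr_A ρ^α = ker tr_A ρ`, since `v ∈ ker tr_A M` means `M (1 ⊗ v) = 0` for positive
semidefinite `M`.
-/

section SupportRpow

/-- The real power on the support: `x ^ t` for `x ≠ 0` and `0` at `x = 0`. This is the scalar
function that `matRpow` applies to the eigenvalues; on `0 ≤ x` it differs from `Real.rpow` only in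
that `0 ^ 0 = 0`. -/
noncomputable def supportRpow (t x : ℝ) : ℝ := if x = 0 then 0 else x ^ t

variable {x y c : ℝ}

@[simp] lemma supportRpow_zero_right (t : ℝ) : supportRpow t 0 = 0 := if_pos rfl

lemma supportRpow_of_ne_zero (t : ℝ) (hx : x ≠ 0) : supportRpow t x = x ^ t := if_neg hx

@[simp] lemma supportRpow_one (x : ℝ) : supportRpow 1 x = x := by
  rcases eq_or_ne x 0 with rfl | hx
  · exact supportRpow_zero_right 1
  · rw [supportRpow_of_ne_zero _ hx, Real.rpow_one]

lemma supportRpow_nonneg (t : ℝ) (hx : 0 ≤ x) : 0 ≤ supportRpow t x := by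
  unfold supportRpow
  positivity

lemma supportRpow_mul_supportRpow (s t : ℝ) (hx : 0 ≤ x) :
    supportRpow s x * supportRpow t x = supportRpow (s + t) x := by
  rcases hx.eq_or_lt with rfl | hx
  · simp
  · simp only [supportRpow_of_ne_zero _ hx.ne', Real.rpow_add hx]

lemma supportRpow_supportRpow (s t : ℝ) (hx : 0 ≤ x) :
    supportRpow t (supportRpow s x) = supportRpow (s * t) x := by
  rcases hx.eq_or_lt with rfl | hx
  · simp
  · simp only [supportRpow_of_ne_zero _ hx.ne', Real.rpow_mul hx.le,
      supportRpow_of_ne_zero _ (Real.rpow_pos_of_pos hx s).ne']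

lemma supportRpow_const_mul (t : ℝ) (hc : 0 < c) (hx : 0 ≤ x) :
    supportRpow t (c * x) = c ^ t * supportRpow t x := by
  rcases hx.eq_or_lt with rfl | hx
  · simp
  · simp only [supportRpow_of_ne_zero _ hx.ne', supportRpow_of_ne_zero _ (mul_pos hc hx).ne',
      Real.mul_rpow hc.le hx.le]

/-- Weighted AM-GM for `x * y ^ (1 - α)` and `y` with weights `1 / α` and `1 - 1 / α`. -/
lemma mul_rpow_one_div_le {α : ℝ} (hα : 1 ≤ α) (hx : 0 ≤ x) (hy : 0 < y) :
    α * x ^ (1 / α) ≤ x * y ^ (1 - α) + (α - 1) * y := by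
  have hα0 : 0 < α := one_pos.trans_le hα
  have hprod : (x * y ^ (1 - α)) ^ (1 / α) * y ^ (1 - 1 / α) = x ^ (1 / α) := by
    rw [Real.mul_rpow hx (by positivity), ← Real.rpow_mul hy.le, mul_assoc, ← Real.rpow_add hy,
      show (1 - α) * (1 / α) + (1 - 1 / α) = 0 by field_simp; ring, Real.rpow_zero, mul_one]
  have hamgm := Real.geom_mean_le_arith_mean2_weighted (one_div_nonneg.2 hα0.le)
    (sub_nonneg.2 ((div_le_one hα0).2 hα)) (mul_nonneg hx (Real.rpow_nonneg hy.le (1 - α))) hy.le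
    (add_sub_cancel _ _)
  rw [hprod] at hamgm
  calc α * x ^ (1 / α)
      ≤ α * (1 / α * (x * y ^ (1 - α)) + (1 - 1 / α) * y) := by gcongr
    _ = x * y ^ (1 - α) + (α - 1) * y := by field_simp

lemma mul_supportRpow_one_div_le {α : ℝ} (hα : 1 ≤ α) (hx : 0 ≤ x) (hy : 0 ≤ y) :
    α * (supportRpow (1 / α) x * supportRpow 0 y) ≤ x * supportRpow (1 - α) y + (α - 1) * y := by
  rcases hy.eq_or_lt with rfl | hy
  · simp
  rw [supportRpow_of_ne_zero _ hy.ne', supportRpow_of_ne_zero _ hy.ne', Real.rpow_zero, mul_one]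
  rcases hx.eq_or_lt with rfl | hx
  · simpa using mul_nonneg (sub_nonneg.2 hα) hy.le
  · rw [supportRpow_of_ne_zero _ hx.ne']
    exact mul_rpow_one_div_le hα hx.le hy

end SupportRpow

section Spectrum

variable {n 𝕜 : Type*} [Fintype n] [RCLike 𝕜] {A B : Matrix n n 𝕜}

lemma trace_re_pos (hA : A.PosSemidef) (hA0 : A ≠ 0) : 0 < RCLike.re A.trace :=
  (RCLike.pos_iff.1 (hA.trace_nonneg.lt_of_ne' (mt hA.trace_eq_zero_iff.1 hA0))).1

lemma coe_re_trace (hA : A.IsHermitian) : (RCLike.re A.trace : 𝕜) = A.trace := by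
  classical
  rw [hA.trace_eq_sum_eigenvalues, ← RCLike.ofReal_sum, RCLike.ofReal_re]

open scoped MatrixOrder in
lemma trace_conjTranspose_mul_mul_eq_zero_iff {m : Type*} [Fintype m] (hA : A.PosSemidef)
    (X : Matrix n m 𝕜) : (Xᴴ * A * X).trace = 0 ↔ A * X = 0 := by
  classical
  obtain ⟨C, rfl⟩ := CStarAlgebra.nonneg_iff_eq_star_mul_self.1 hA.nonneg
  rw [star_eq_conjTranspose, conjTranspose_mul_self_mul_eq_zero,
    ← trace_conjTranspose_mul_self_eq_zero_iff (A := C * X), conjTranspose_mul]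
  simp only [Matrix.mul_assoc]

variable [DecidableEq n]

lemma continuousOn_spectrum_matrix (A : Matrix n n 𝕜) (f : ℝ → ℝ) :
    ContinuousOn f (spectrum ℝ A) :=
  Matrix.finite_real_spectrum.continuousOn f

open scoped MatrixOrder in
lemma nonneg_of_mem_spectrum_posSemidef (hA : A.PosSemidef) {x : ℝ} (hx : x ∈ spectrum ℝ A) :
    0 ≤ x :=
  spectrum_nonneg_of_nonneg hA.nonneg hx

lemma trace_mul_diagonal_mul_conjTranspose_mul_diagonal {m : Type*} [Fintype m] [DecidableEq m]
    (W : Matrix m n 𝕜) (d : m → ℝ) (e : n → ℝ) :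
    (W * diagonal (fun j => (e j : 𝕜)) * Wᴴ * diagonal (fun i => (d i : 𝕜))).trace =
      ((∑ i, ∑ j, ‖W i j‖ ^ 2 * (d i * e j) : ℝ) : 𝕜) := by
  simp only [Matrix.trace, diag_apply]
  push_cast
  refine Finset.sum_congr rfl fun i _ => ?_
  rw [mul_diagonal, Matrix.mul_apply, Finset.sum_mul]
  refine Finset.sum_congr rfl fun j _ => ?_
  rw [mul_diagonal, conjTranspose_apply, RCLike.star_def]
  linear_combination (d i * e j : 𝕜) * RCLike.mul_conj (W i j)

lemma trace_cfc_mul_cfc (hA : A.IsHermitian) (hB : B.IsHermitian) (f g : ℝ → ℝ) :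
    (cfc f A * cfc g B).trace =
      ((∑ i, ∑ j, ‖(star (hA.eigenvectorUnitary : Matrix n n 𝕜) * hB.eigenvectorUnitary) i j‖ ^ 2 *
        (f (hA.eigenvalues i) * g (hB.eigenvalues j)) : ℝ) : 𝕜) := by
  rw [← trace_mul_diagonal_mul_conjTranspose_mul_diagonal _ (fun i => f (hA.eigenvalues i))
      (fun j => g (hB.eigenvalues j)), trace_mul_comm, hA.cfc_eq, hB.cfc_eq,
    Matrix.IsHermitian.cfc, Matrix.IsHermitian.cfc, Unitary.conjStarAlgAut_apply,
    Unitary.conjStarAlgAut_apply, ← star_eq_conjTranspose, star_mul, star_star]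
  simp only [Matrix.mul_assoc]
  rw [trace_mul_comm (star (hA.eigenvectorUnitary : Matrix n n 𝕜))]
  simp only [Matrix.mul_assoc]
  rfl

end Spectrum

section Kernel

variable {l m n k R : Type*} [Fintype n] [CommSemiring R]

lemma mulVec_eq_zero_iff_mul_replicateCol (A : Matrix m n R) (v : n → R) :
    A *ᵥ v = 0 ↔ A * replicateCol Unit v = 0 := by
  rw [← replicateCol_mulVec, replicateCol_eq_zero]

lemma ker_mulVecLin_smul {K : Type*} [Field K] [Algebra K R] {c : K} (hc : c ≠ 0)
    (A : Matrix m n R) :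
    LinearMap.ker (c • A).mulVecLin = LinearMap.ker A.mulVecLin := by
  ext v
  simp only [LinearMap.mem_ker, mulVecLin_apply, smul_mulVec, smul_eq_zero_iff_right hc]

lemma mul_eq_zero_of_ker_mulVecLin_le {A : Matrix l n R} {B : Matrix m n R}
    (hker : LinearMap.ker A.mulVecLin ≤ LinearMap.ker B.mulVecLin) {X : Matrix n k R}
    (hX : A * X = 0) : B * X = 0 := by
  ext i j
  exact congrFun (hker (funext fun i' => congrFun₂ hX i' j : A *ᵥ X.col j = 0)) i

end Kernel

section MatRpow

variable {n : Type*} [Fintype n] [DecidableEq n] {A B : Matrix n n ℂ}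

lemma matRpow_eq_cfc (hA : A.IsHermitian) (t : ℝ) : matRpow A t = cfc (supportRpow t) A := by
  rw [hA.cfc_eq, Matrix.IsHermitian.cfc, Unitary.conjStarAlgAut_apply, matRpow, dif_pos hA]
  rfl

open scoped MatrixOrder in
lemma posSemidef_matRpow (hA : A.PosSemidef) (t : ℝ) : (matRpow A t).PosSemidef := by
  rw [matRpow_eq_cfc hA.isHermitian]
  exact (cfc_nonneg fun x hx =>
    supportRpow_nonneg t (nonneg_of_mem_spectrum_posSemidef hA hx)).posSemidef

lemma matRpow_mul_matRpow (hA : A.PosSemidef) (s t : ℝ) :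
    matRpow A s * matRpow A t = matRpow A (s + t) := by
  simp only [matRpow_eq_cfc hA.isHermitian]
  rw [← cfc_mul _ _ _ (continuousOn_spectrum_matrix A _) (continuousOn_spectrum_matrix A _)]
  exact cfc_congr fun x hx =>
    supportRpow_mul_supportRpow s t (nonneg_of_mem_spectrum_posSemidef hA hx)

lemma matRpow_one (hA : A.IsHermitian) : matRpow A 1 = A := by
  rw [matRpow_eq_cfc hA, show supportRpow 1 = id from funext supportRpow_one,
    cfc_id ℝ A hA.isSelfAdjoint]

lemma matRpow_matRpow (hA : A.PosSemidef) (s t : ℝ) :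
    matRpow (matRpow A s) t = matRpow A (s * t) := by
  rw [matRpow_eq_cfc (posSemidef_matRpow hA s).isHermitian]
  simp only [matRpow_eq_cfc hA.isHermitian]
  rw [← cfc_comp _ _ A hA.isHermitian.isSelfAdjoint
    ((Matrix.finite_real_spectrum.image _).continuousOn _) (continuousOn_spectrum_matrix A _)]
  exact cfc_congr fun x hx => supportRpow_supportRpow s t (nonneg_of_mem_spectrum_posSemidef hA hx)

lemma matRpow_smul (hA : A.PosSemidef) {c : ℝ} (hc : 0 < c) (t : ℝ) :
    matRpow (c • A) t = c ^ t • matRpow A t := by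
  rw [matRpow_eq_cfc (hA.smul hc.le).isHermitian, matRpow_eq_cfc hA.isHermitian,
    ← cfc_const_mul_id c A hA.isHermitian.isSelfAdjoint,
    ← cfc_comp _ _ A hA.isHermitian.isSelfAdjoint
      ((Matrix.finite_real_spectrum.image _).continuousOn _) (continuousOn_spectrum_matrix A _),
    ← cfc_smul _ _ _ (continuousOn_spectrum_matrix A _)]
  exact cfc_congr fun x hx => supportRpow_const_mul t hc (nonneg_of_mem_spectrum_posSemidef hA hx)

lemma matRpow_mul_eq_zero_iff {m : Type*} (hA : A.PosSemidef) (t : ℝ) (X : Matrix n m ℂ) :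
    matRpow A t * X = 0 ↔ A * X = 0 := by
  have hA1 : matRpow A (1 - t) * matRpow A t = A := by
    rw [matRpow_mul_matRpow hA, sub_add_cancel, matRpow_one hA.isHermitian]
  have hAt : matRpow A (t - 1) * A = matRpow A t := by
    conv_lhs => rw [← matRpow_one hA.isHermitian, matRpow_matRpow hA, one_mul,
      matRpow_mul_matRpow hA, sub_add_cancel]
  constructor
  · intro h
    rw [← hA1, Matrix.mul_assoc, h, Matrix.mul_zero]
  · intro h
    rw [← hAt, Matrix.mul_assoc, h, Matrix.mul_zero]

lemma matRpow_eq_zero_iff (hA : A.PosSemidef) (t : ℝ) : matRpow A t = 0 ↔ A = 0 := by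
  simpa using matRpow_mul_eq_zero_iff hA t (1 : Matrix n n ℂ)

lemma trace_matRpow_re_pos (hA : A.PosSemidef) (hA0 : A ≠ 0) (t : ℝ) :
    0 < (matRpow A t).trace.re :=
  trace_re_pos (posSemidef_matRpow hA t) (mt (matRpow_eq_zero_iff hA t).1 hA0)

lemma ker_mulVecLin_matRpow (hA : A.PosSemidef) (t : ℝ) :
    LinearMap.ker (matRpow A t).mulVecLin = LinearMap.ker A.mulVecLin := by
  ext v
  simp only [LinearMap.mem_ker, mulVecLin_apply, mulVec_eq_zero_iff_mul_replicateCol,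
    matRpow_mul_eq_zero_iff hA]

/-- `matRpow B 0` is the projection onto the support of `B`. -/
lemma mul_matRpow_zero_of_ker_le {m : Type*} {M : Matrix m n ℂ} (hB : B.PosSemidef)
    (hker : LinearMap.ker B.mulVecLin ≤ LinearMap.ker M.mulVecLin) : M * matRpow B 0 = M := by
  have hcompl : B * (1 - matRpow B 0) = 0 := by
    rw [← matRpow_mul_eq_zero_iff hB 0, Matrix.mul_sub, matRpow_mul_matRpow hB, add_zero,
      Matrix.mul_one, sub_self]
  have hvanish := mul_eq_zero_of_ker_mulVecLin_le hker hcompl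
  rwa [Matrix.mul_sub, Matrix.mul_one, sub_eq_zero, eq_comm] at hvanish

end MatRpow

section TraceInequalities

variable {n : Type*} [Fintype n] [DecidableEq n] {A B : Matrix n n ℂ} {α : ℝ}

lemma trace_young_inequality (hα : 1 ≤ α) (hA : A.PosSemidef) (hB : B.PosSemidef)
    (hker : LinearMap.ker B.mulVecLin ≤ LinearMap.ker A.mulVecLin) :
    α * (matRpow A (1 / α)).trace.re ≤
      (A * matRpow B (1 - α)).trace.re + (α - 1) * B.trace.re := by
  have hpow : (matRpow A (1 / α)).trace =
      (cfc (supportRpow (1 / α)) A * cfc (supportRpow 0) B).trace := by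
    rw [← matRpow_eq_cfc hA.isHermitian, ← matRpow_eq_cfc hB.isHermitian,
      mul_matRpow_zero_of_ker_le hB (by rwa [ker_mulVecLin_matRpow hA])]
  have hmul : (A * matRpow B (1 - α)).trace =
      (cfc (id : ℝ → ℝ) A * cfc (supportRpow (1 - α)) B).trace := by
    rw [cfc_id ℝ A hA.isHermitian.isSelfAdjoint, matRpow_eq_cfc hB.isHermitian]
  have htr : B.trace = (cfc (1 : ℝ → ℝ) A * cfc (id : ℝ → ℝ) B).trace := by
    rw [cfc_one ℝ A hA.isHermitian.isSelfAdjoint, cfc_id ℝ B hB.isHermitian.isSelfAdjoint, one_mul]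
  rw [hpow, hmul, htr]
  simp only [trace_cfc_mul_cfc hA.isHermitian hB.isHermitian, Complex.coe_algebraMap,
    Complex.ofReal_re, Finset.mul_sum, ← Finset.sum_add_distrib]
  refine Finset.sum_le_sum fun i _ => Finset.sum_le_sum fun j _ => ?_
  have hscalar := mul_supportRpow_one_div_le hα (hA.eigenvalues_nonneg i) (hB.eigenvalues_nonneg j)
  simp only [id, Pi.one_apply]
  linear_combination
    ‖(star (hA.isHermitian.eigenvectorUnitary : Matrix n n ℂ) *
      hB.isHermitian.eigenvectorUnitary) i j‖ ^ 2 * hscalar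

lemma trace_reverse_holder_inequality (hα : 1 ≤ α) (hA : A.PosSemidef) (hB : B.PosSemidef)
    (hker : LinearMap.ker B.mulVecLin ≤ LinearMap.ker A.mulVecLin) :
    (matRpow A (1 / α)).trace.re ^ α ≤
      (A * matRpow B (1 - α)).trace.re * B.trace.re ^ (α - 1) := by
  have hα0 : α ≠ 0 := (one_pos.trans_le hα).ne'
  rcases eq_or_ne A 0 with rfl | hA0
  · simp [(matRpow_eq_zero_iff PosSemidef.zero _).2, Real.zero_rpow hα0]
  have hB0 : B ≠ 0 := fun h =>
    hA0 (by simpa using mul_eq_zero_of_ker_mulVecLin_le hker (show B * 1 = 0 by rw [h, zero_mul]))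
  set T := (matRpow A (1 / α)).trace.re
  set S := B.trace.re
  have hT : 0 < T := trace_matRpow_re_pos hA hA0 _
  have hS : 0 < S := trace_re_pos hB hB0
  have hc : 0 < T / S := div_pos hT hS
  have hyoung := trace_young_inequality hα hA (hB.smul hc.le)
    (by rwa [ker_mulVecLin_smul hc.ne'])
  rw [matRpow_smul hB hc, Matrix.mul_smul, trace_smul, trace_smul, Complex.smul_re, Complex.smul_re,
    smul_eq_mul, smul_eq_mul, div_mul_cancel₀ T hS.ne'] at hyoung
  have hle : T ≤ (T / S) ^ (1 - α) * (A * matRpow B (1 - α)).trace.re := by linarith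
  calc T ^ α = T * (T / S) ^ (α - 1) * S ^ (α - 1) := by
        rw [mul_assoc, ← Real.mul_rpow hc.le hS.le, div_mul_cancel₀ T hS.ne',
          Real.rpow_sub_one hT.ne', mul_div_cancel₀ _ hT.ne']
    _ ≤ (T / S) ^ (1 - α) * (A * matRpow B (1 - α)).trace.re * (T / S) ^ (α - 1) *
        S ^ (α - 1) := by gcongr
    _ = (A * matRpow B (1 - α)).trace.re * S ^ (α - 1) := by
        rw [mul_right_comm _ _ ((T / S) ^ (α - 1)), ← Real.rpow_add hc]
        simp

end TraceInequalities

section OptimalState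

variable {n : Type*} [Fintype n] [DecidableEq n] {A : Matrix n n ℂ} {α : ℝ}

/-- The state `A ^ (1 / α) / tr (A ^ (1 / α))`, at which the reverse Hölder inequality for `A` is an
equality. -/
noncomputable def optimalState (α : ℝ) (A : Matrix n n ℂ) : Matrix n n ℂ :=
  (matRpow A (1 / α)).trace⁻¹ • matRpow A (1 / α)

lemma optimalState_eq_real_smul (hA : A.PosSemidef) (α : ℝ) :
    optimalState α A = ((matRpow A (1 / α)).trace.re)⁻¹ • matRpow A (1 / α) := by
  have htr := coe_re_trace (posSemidef_matRpow hA (1 / α)).isHermitian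
  simp only [RCLike.re_eq_complex_re, RCLike.ofReal_eq_complex_ofReal] at htr
  rw [optimalState, ← Complex.coe_smul, Complex.ofReal_inv, htr]

lemma posSemidef_optimalState (hA : A.PosSemidef) (α : ℝ) : (optimalState α A).PosSemidef := by
  rw [optimalState_eq_real_smul hA]
  exact (posSemidef_matRpow hA _).smul
    (inv_nonneg.2 (Complex.nonneg_iff.1 (posSemidef_matRpow hA _).trace_nonneg).1)

lemma trace_optimalState (hA : A.PosSemidef) (hA0 : A ≠ 0) (α : ℝ) :
    (optimalState α A).trace = 1 := by
  rw [optimalState, trace_smul, smul_eq_mul, inv_mul_cancel₀]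
  rwa [Ne, (posSemidef_matRpow hA _).trace_eq_zero_iff, matRpow_eq_zero_iff hA]

lemma ker_mulVecLin_optimalState (hA : A.PosSemidef) (hA0 : A ≠ 0) (α : ℝ) :
    LinearMap.ker (optimalState α A).mulVecLin = LinearMap.ker A.mulVecLin := by
  rw [optimalState_eq_real_smul hA,
    ker_mulVecLin_smul (inv_ne_zero (trace_matRpow_re_pos hA hA0 _).ne'), ker_mulVecLin_matRpow hA]

lemma trace_mul_matRpow_optimalState (hα : α ≠ 0) (hA : A.PosSemidef) (hA0 : A ≠ 0) :
    (A * matRpow (optimalState α A) (1 - α)).trace.re = (matRpow A (1 / α)).trace.re ^ α := by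
  have hT := trace_matRpow_re_pos hA hA0 (1 / α)
  have hpow : A * matRpow A (1 / α * (1 - α)) = matRpow A (1 / α) := by
    conv_lhs => rw [← matRpow_one hA.isHermitian, matRpow_matRpow hA, one_mul,
      matRpow_mul_matRpow hA, show 1 + 1 / α * (1 - α) = 1 / α by field_simp; ring]
  rw [optimalState_eq_real_smul hA, matRpow_smul (posSemidef_matRpow hA _) (inv_pos.2 hT),
    matRpow_matRpow hA, Matrix.mul_smul, hpow, trace_smul, Complex.smul_re, smul_eq_mul,
    Real.inv_rpow hT.le, ← Real.rpow_neg hT.le, ← Real.rpow_add_one hT.ne']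
  ring_nf

end OptimalState

section PartialTrace

variable {ι κ : Type*} [Fintype ι]

lemma posSemidef_trFst {M : Matrix (ι × κ) (ι × κ) ℂ} (hM : M.PosSemidef) :
    (trFst M).PosSemidef := by
  have hsum : trFst M = ∑ i, M.submatrix (Prod.mk i) (Prod.mk i) := by
    ext j j'
    simp [trFst, Matrix.sum_apply]
  rw [hsum]
  exact posSemidef_sum _ fun i _ => hM.submatrix _

lemma trace_trFst [Fintype κ] (M : Matrix (ι × κ) (ι × κ) ℂ) : (trFst M).trace = M.trace := by
  simp only [Matrix.trace, trFst, diag_apply, of_apply, Fintype.sum_prod_type]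
  exact Finset.sum_comm

lemma trFst_eq_zero_iff [Finite κ] {M : Matrix (ι × κ) (ι × κ) ℂ} (hM : M.PosSemidef) :
    trFst M = 0 ↔ M = 0 := by
  cases nonempty_fintype κ
  rw [← (posSemidef_trFst hM).trace_eq_zero_iff, trace_trFst, hM.trace_eq_zero_iff]

variable [Fintype κ] [DecidableEq ι]

lemma trFst_mul_one_kronecker (M : Matrix (ι × κ) (ι × κ) ℂ) (X : Matrix κ κ ℂ) :
    trFst (M * ((1 : Matrix ι ι ℂ) ⊗ₖ X)) = trFst M * X := by
  ext j j'
  simp only [trFst, of_apply, Matrix.mul_apply, kroneckerMap_apply, one_apply, ite_mul, one_mul,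
    zero_mul, mul_ite, mul_zero, Fintype.sum_prod_type_right, Finset.sum_ite_eq', Finset.mem_univ,
    if_true, Finset.sum_mul]
  exact Finset.sum_comm

lemma trace_mul_one_kronecker (M : Matrix (ι × κ) (ι × κ) ℂ) (X : Matrix κ κ ℂ) :
    (M * ((1 : Matrix ι ι ℂ) ⊗ₖ X)).trace = (trFst M * X).trace := by
  rw [← trFst_mul_one_kronecker, trace_trFst]

lemma trFst_mul_eq_zero_iff {m : Type*} [Finite m] {M : Matrix (ι × κ) (ι × κ) ℂ}
    (hM : M.PosSemidef) (X : Matrix κ m ℂ) :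
    trFst M * X = 0 ↔ M * ((1 : Matrix ι ι ℂ) ⊗ₖ X) = 0 := by
  cases nonempty_fintype m
  have htrace : (((1 : Matrix ι ι ℂ) ⊗ₖ X)ᴴ * M * ((1 : Matrix ι ι ℂ) ⊗ₖ X)).trace =
      (Xᴴ * trFst M * X).trace := by
    rw [trace_mul_cycle, conjTranspose_kronecker, conjTranspose_one, ← mul_kronecker_mul,
      Matrix.one_mul, trace_mul_comm, trace_mul_one_kronecker, trace_mul_comm, ← trace_mul_cycle]
  rw [← trace_conjTranspose_mul_mul_eq_zero_iff (posSemidef_trFst hM), ← htrace,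
    trace_conjTranspose_mul_mul_eq_zero_iff hM]

lemma ker_mulVecLin_trFst_matRpow [DecidableEq κ] {ρ : Matrix (ι × κ) (ι × κ) ℂ}
    (hρ : ρ.PosSemidef) (t : ℝ) :
    LinearMap.ker (trFst (matRpow ρ t)).mulVecLin = LinearMap.ker (trFst ρ).mulVecLin := by
  ext v
  simp only [LinearMap.mem_ker, mulVecLin_apply, mulVec_eq_zero_iff_mul_replicateCol,
    trFst_mul_eq_zero_iff hρ, trFst_mul_eq_zero_iff (posSemidef_matRpow hρ t),
    matRpow_mul_eq_zero_iff hρ]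

end PartialTrace

/-- The quantity `-D_α(ρ_AB ‖ 1_A ⊗ σ_B)` whose supremum over states `σ_B` is the conditional Rényi
entropy `H_α^↑(A|B)`. -/
noncomputable def condRenyiObjective {ι κ : Type*} [Fintype ι] [DecidableEq ι] [Fintype κ]
    [DecidableEq κ] (α : ℝ) (ρ : Matrix (ι × κ) (ι × κ) ℂ) (σ : Matrix κ κ ℂ) : ℝ :=
  (1 - α)⁻¹ * Real.log ((matRpow ρ α * ((1 : Matrix ι ι ℂ) ⊗ₖ matRpow σ (1 - α))).trace.re)

section CondRenyi

variable {ι κ : Type*} [Fintype ι] [DecidableEq ι] [Fintype κ] [DecidableEq κ] {α : ℝ}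
  {ρ : Matrix (ι × κ) (ι × κ) ℂ}

lemma trFst_matRpow_ne_zero (hρ : ρ.PosSemidef) (hρ0 : ρ ≠ 0) (t : ℝ) :
    trFst (matRpow ρ t) ≠ 0 := by
  rwa [Ne, trFst_eq_zero_iff (posSemidef_matRpow hρ t), matRpow_eq_zero_iff hρ]

lemma condRenyiObjective_le (hα : 1 < α) (hρ : ρ.PosSemidef) (hρ0 : ρ ≠ 0) {σ : Matrix κ κ ℂ}
    (hσ : σ.PosSemidef) (hσ1 : σ.trace = 1)
    (hker : LinearMap.ker σ.mulVecLin ≤ LinearMap.ker (trFst ρ).mulVecLin) :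
    condRenyiObjective α ρ σ ≤
      (α / (1 - α)) * Real.log ((matRpow (trFst (matRpow ρ α)) (1 / α)).trace.re) := by
  have hA := posSemidef_trFst (posSemidef_matRpow hρ α)
  have hT := trace_matRpow_re_pos hA (trFst_matRpow_ne_zero hρ hρ0 α) (1 / α)
  have hholder := trace_reverse_holder_inequality hα.le hA hσ
    (by rwa [ker_mulVecLin_trFst_matRpow hρ])
  rw [hσ1, Complex.one_re, Real.one_rpow, mul_one] at hholder
  rw [condRenyiObjective, trace_mul_one_kronecker, div_eq_inv_mul, mul_assoc, ← Real.log_rpow hT]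
  exact mul_le_mul_of_nonpos_left (Real.log_le_log (by positivity) hholder)
    (inv_nonpos.2 (by linarith))

lemma condRenyiObjective_optimalState (hα : α ≠ 0) (hρ : ρ.PosSemidef) (hρ0 : ρ ≠ 0) :
    condRenyiObjective α ρ (optimalState α (trFst (matRpow ρ α))) =
      (α / (1 - α)) * Real.log ((matRpow (trFst (matRpow ρ α)) (1 / α)).trace.re) := by
  have hA := posSemidef_trFst (posSemidef_matRpow hρ α)
  have hA0 := trFst_matRpow_ne_zero hρ hρ0 α
  rw [condRenyiObjective, trace_mul_one_kronecker, trace_mul_matRpow_optimalState hα hA hA0,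
    Real.log_rpow (trace_matRpow_re_pos hA hA0 _)]
  ring

theorem condRenyiUp_formula_of_one_lt_general (hα : 1 < α) (hρ : ρ.PosSemidef) (hρ0 : ρ ≠ 0) :
    IsGreatest {x : ℝ | ∃ σ : Matrix κ κ ℂ, σ.PosSemidef ∧ σ.trace = 1 ∧
        LinearMap.ker σ.mulVecLin ≤ LinearMap.ker (trFst ρ).mulVecLin ∧
        x = condRenyiObjective α ρ σ}
      ((α / (1 - α)) * Real.log ((matRpow (trFst (matRpow ρ α)) (1 / α)).trace.re)) ∧
    condRenyiObjective α ρ (optimalState α (trFst (matRpow ρ α))) =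
      (α / (1 - α)) * Real.log ((matRpow (trFst (matRpow ρ α)) (1 / α)).trace.re) := by
  have hA := posSemidef_trFst (posSemidef_matRpow hρ α)
  have hA0 := trFst_matRpow_ne_zero hρ hρ0 α
  have hopt := condRenyiObjective_optimalState (one_pos.trans hα).ne' hρ hρ0
  refine ⟨⟨⟨optimalState α (trFst (matRpow ρ α)), posSemidef_optimalState hA α,
    trace_optimalState hA hA0 α, ?_, hopt.symm⟩, ?_⟩, hopt⟩
  · rw [ker_mulVecLin_optimalState hA hA0, ker_mulVecLin_trFst_matRpow hρ]
  · rintro x ⟨σ, hσ, hσ1, hker, rfl⟩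
    exact condRenyiObjective_le hα hρ hρ0 hσ hσ1 hker

end CondRenyi

theorem condRenyiUp_formula_of_one_lt {ι κ : Type*}
    [Fintype ι] [DecidableEq ι] [Fintype κ] [DecidableEq κ]
    (α : ℝ) (hα : 1 < α)
    (ρ : Matrix (ι × κ) (ι × κ) ℂ) (hρ : ρ.PosSemidef) (hρ1 : ρ.trace = 1) :
    sSup {x : ℝ | ∃ σ : Matrix κ κ ℂ, σ.PosSemidef ∧ σ.trace = 1 ∧
        LinearMap.ker σ.mulVecLin ≤ LinearMap.ker (trFst ρ).mulVecLin ∧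
        x = (1 - α)⁻¹ * Real.log
          ((matRpow ρ α * ((1 : Matrix ι ι ℂ) ⊗ₖ matRpow σ (1 - α))).trace.re)} =
      (α / (1 - α)) * Real.log ((matRpow (trFst (matRpow ρ α)) (1 / α)).trace.re) ∧
    (1 - α)⁻¹ * Real.log
        ((matRpow ρ α * ((1 : Matrix ι ι ℂ) ⊗ₖ matRpow
          (((matRpow (trFst (matRpow ρ α)) (1 / α)).trace)⁻¹ •
            matRpow (trFst (matRpow ρ α)) (1 / α)) (1 - α))).trace.re) =
      (α / (1 - α)) * Real.log ((matRpow (trFst (matRpow ρ α)) (1 / α)).trace.re) := by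
  obtain ⟨hgreatest, hopt⟩ := condRenyiUp_formula_of_one_lt_general hα hρ
    (by rintro rfl; simp at hρ1)
  exact ⟨hgreatest.csSup_eq, hopt⟩
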